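/- arXiv:1811.02822 — 2 statements merged into one kernel-verified Lean document; each statement's English description precedes it below -/
import Mathlib

section
/- Proposition 2 (validity of the CRIT_2 lower bound): Let x* be an optimal leader strategy for BKP with optimal value z* = f(x*), and suppose ∑_{i : x*_i = 0} w_i > C_l, so that x* has a critical item c. Then for every finite family T of subsets of {1,...,n}, z(CRIT_2(c,T)) ≤ z*. -/
open Finset

/-- A 0/1 vector. -/
def Binary {n : ℕ} (x : Fin n → ℤ) : Prop :=
  ∀ i, x i = 0 ∨ x i = 1

/-- The set of follower objective values attainable against a leader strategy `x`. -/
def followerValues {n : ℕ} (p w : Fin n → ℤ) (Cl : ℤ) (x : Fin n → ℤ) : Set ℤ :=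
  {s | ∃ y : Fin n → ℤ, Binary y ∧ (∀ i, y i ≤ 1 - x i) ∧
    (∑ i, w i * y i) ≤ Cl ∧ s = ∑ i, p i * y i}

/-- `c` is the critical item of the leader strategy `x`. -/
def IsCritical {n : ℕ} (w : Fin n → ℤ) (Cl : ℤ) (x : Fin n → ℤ) (c : Fin n) : Prop :=
  x c = 0 ∧
  (∑ i ∈ univ.filter (fun i => i < c ∧ x i = 0), w i) < Cl ∧
  Cl ≤ ∑ i ∈ univ.filter (fun i => i ≤ c ∧ x i = 0), w i

/-- Weight of the split solution of `x` with critical item `c`. -/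
def splitWeight {n : ℕ} (w : Fin n → ℤ) (c : Fin n) (x : Fin n → ℤ) : ℤ :=
  ∑ i ∈ univ.filter (fun i => i < c), w i * (1 - x i)

/-- Profit of the split solution of `x` with critical item `c`. -/
def splitProfit {n : ℕ} (p : Fin n → ℤ) (c : Fin n) (x : Fin n → ℤ) : ℤ :=
  ∑ i ∈ univ.filter (fun i => i < c), p i * (1 - x i)

/-- Objective values of the feasible solutions of model `CRIT₁(c)`. -/
def crit1Values {n : ℕ} (p w v : Fin n → ℤ) (Cu Cl : ℤ) (c : Fin n) : Set ℤ :=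
  {s | ∃ x : Fin n → ℤ, Binary x ∧ (∑ i, v i * x i) ≤ Cu ∧ x c = 0 ∧
    1 ≤ Cl - splitWeight w c x ∧ Cl - splitWeight w c x ≤ w c ∧
    s = splitProfit p c x}

/-- Profit change `p^τ` of a tuple `τ` w.r.t. critical item `c`. -/
def pT {n : ℕ} (p : Fin n → ℤ) (c : Fin n) (τ : Finset (Fin n)) : ℤ :=
  (∑ j ∈ τ.filter (fun j => c ≤ j), p j) - ∑ i ∈ τ.filter (fun i => i < c), p i

/-- Weight change `w^τ` of a tuple `τ` w.r.t. critical item `c`. -/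
def wT {n : ℕ} (w : Fin n → ℤ) (c : Fin n) (τ : Finset (Fin n)) : ℤ :=
  (∑ j ∈ τ.filter (fun j => c ≤ j), w j) - ∑ i ∈ τ.filter (fun i => i < c), w i

/-- Objective values of the feasible solutions of model `CRIT₂(c, T)`. -/
def crit2Values {n : ℕ} (p w v : Fin n → ℤ) (Cu Cl : ℤ) (c : Fin n)
    (T : Finset (Finset (Fin n))) : Set ℤ :=
  {s | ∃ x : Fin n → ℤ, Binary x ∧ (∑ i, v i * x i) ≤ Cu ∧ x c = 0 ∧
    1 ≤ Cl - splitWeight w c x ∧ Cl - splitWeight w c x ≤ w c ∧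
    s = splitProfit p c x +
      (T.filter (fun τ => (∀ i ∈ τ, x i = 0) ∧ wT w c τ ≤ Cl - splitWeight w c x)).fold
        max 0 (pT p c)}

/-!
Let `S` be the split solution of a feasible leader strategy `x` with critical item `c`: the items
before `c` that the leader leaves. Carrying out an exchange `τ` on `S`, that is, dropping the items
of `τ` before `c` and packing the others, yields the item set `S ∆ τ`. It avoids the items taken by
the leader, has profit `p(S) + p^τ` and weight `w(S) + w^τ`, and hence is a follower solution as
soon as `w^τ` is at most the residual capacity. So the `CRIT₂` objective of `x` never exceeds the
follower value of `x`, while criticality of `c` makes `x` feasible for `CRIT₂(c, T)`.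
-/

open scoped symmDiff

theorem sum_symmDiff_eq_add_sub {ι M : Type*} [DecidableEq ι] [AddCommGroup M]
    (s t : Finset ι) (g : ι → M) :
    ∑ i ∈ s ∆ t, g i = ∑ i ∈ s, g i + (∑ i ∈ t \ s, g i - ∑ i ∈ t ∩ s, g i) := by
  have hsplit : ∑ i ∈ s, g i = ∑ i ∈ t ∩ s, g i + ∑ i ∈ s \ t, g i := by
    rw [inter_comm, sum_inter_add_sum_sdiff]
  rw [symmDiff_def, sup_eq_union, sum_union disjoint_sdiff_sdiff, hsplit]
  abel

section Follower

variable {n : ℕ} {p w v x : Fin n → ℤ} {Cu Cl : ℤ} {c : Fin n} {τ : Finset (Fin n)}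

theorem sum_mem_followerValues (hx : Binary x) {s : Finset (Fin n)} (hs : ∀ i ∈ s, x i = 0)
    (hweight : ∑ i ∈ s, w i ≤ Cl) : ∑ i ∈ s, p i ∈ followerValues p w Cl x := by
  have hsum (g : Fin n → ℤ) : ∑ i, g i * (if i ∈ s then 1 else 0) = ∑ i ∈ s, g i := by
    simp
  refine ⟨fun i => if i ∈ s then 1 else 0, fun i => (ite_eq_or_eq _ _ _).symm, fun i => ?_,
    (hsum w).trans_le hweight, (hsum p).symm⟩
  dsimp only
  split_ifs with hi
  · simp [hs i hi]
  · rcases hx i with h | h <;> simp [h]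

/-- The split solution of `x` with respect to `c`, as a set of items: the follower greedily packs
everything before `c` that the leader has not taken. -/
def splitItems (c : Fin n) (x : Fin n → ℤ) : Finset (Fin n) :=
  univ.filter fun i => i < c ∧ x i = 0

theorem mem_splitItems {i : Fin n} : i ∈ splitItems c x ↔ i < c ∧ x i = 0 := by
  simp [splitItems]

theorem splitProfit_eq_sum_splitItems (hx : Binary x) (g : Fin n → ℤ) :
    splitProfit g c x = ∑ i ∈ splitItems c x, g i := by
  rw [splitProfit, splitItems, ← filter_filter, sum_filter (fun i => x i = 0)]
  refine sum_congr rfl fun i _ => ?_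
  rcases hx i with h | h <;> simp [h]

theorem splitWeight_eq_sum_splitItems (hx : Binary x) (g : Fin n → ℤ) :
    splitWeight g c x = ∑ i ∈ splitItems c x, g i :=
  splitProfit_eq_sum_splitItems hx g

theorem pT_eq_sum_sdiff_sub_sum_inter (hτ : ∀ i ∈ τ, x i = 0) (g : Fin n → ℤ) :
    pT g c τ = ∑ i ∈ τ \ splitItems c x, g i - ∑ i ∈ τ ∩ splitItems c x, g i := by
  have hafter : τ.filter (fun i => c ≤ i) = τ \ splitItems c x := by
    grind [mem_splitItems]
  have hbefore : τ.filter (fun i => i < c) = τ ∩ splitItems c x := by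
    grind [mem_splitItems]
  rw [pT, hafter, hbefore]

-- `splitWeight`, `wT` unfold to the same sums as `splitProfit`, `pT`, so `g` may be the weights.
theorem sum_splitItems_symmDiff (hx : Binary x) (hτ : ∀ i ∈ τ, x i = 0) (g : Fin n → ℤ) :
    ∑ i ∈ splitItems c x ∆ τ, g i = splitProfit g c x + pT g c τ := by
  rw [sum_symmDiff_eq_add_sub, splitProfit_eq_sum_splitItems hx, pT_eq_sum_sdiff_sub_sum_inter hτ]

theorem splitProfit_add_pT_mem_followerValues (hx : Binary x) (hτ : ∀ i ∈ τ, x i = 0)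
    (hweight : wT w c τ ≤ Cl - splitWeight w c x) :
    splitProfit p c x + pT p c τ ∈ followerValues p w Cl x := by
  rw [← sum_splitItems_symmDiff hx hτ]
  refine sum_mem_followerValues hx (fun i hi => ?_) ?_
  · rcases mem_symmDiff.mp hi with ⟨hsplit, -⟩ | ⟨hexch, -⟩
    · exact (mem_splitItems.mp hsplit).2
    · exact hτ i hexch
  · calc
      ∑ i ∈ splitItems c x ∆ τ, w i = splitWeight w c x + wT w c τ :=
        sum_splitItems_symmDiff hx hτ w
      _ ≤ Cl := le_sub_iff_add_le'.mp hweight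

theorem splitProfit_mem_followerValues (hx : Binary x) (hweight : splitWeight w c x ≤ Cl) :
    splitProfit p c x ∈ followerValues p w Cl x := by
  rw [splitProfit_eq_sum_splitItems hx]
  exact sum_mem_followerValues hx (fun i hi => (mem_splitItems.mp hi).2)
    ((splitWeight_eq_sum_splitItems hx w).symm.trans_le hweight)

theorem splitProfit_add_fold_max_pT_le {F : ℤ} (hx : Binary x)
    (hF : F ∈ upperBounds (followerValues p w Cl x)) (hweight : splitWeight w c x ≤ Cl)
    (T : Finset (Finset (Fin n))) :
    splitProfit p c x +
      (T.filter (fun τ => (∀ i ∈ τ, x i = 0) ∧ wT w c τ ≤ Cl - splitWeight w c x)).fold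
        max 0 (pT p c) ≤ F := by
  rw [← le_sub_iff_add_le', fold_max_le]
  refine ⟨sub_nonneg.mpr (hF (splitProfit_mem_followerValues hx hweight)), fun τ hτ => ?_⟩
  obtain ⟨-, havail, hfit⟩ := mem_filter.mp hτ
  exact le_sub_iff_add_le'.mpr (hF (splitProfit_add_pT_mem_followerValues hx havail hfit))

namespace IsCritical

theorem splitWeight_lt (hc : IsCritical w Cl x c) (hx : Binary x) : splitWeight w c x < Cl :=
  (splitWeight_eq_sum_splitItems hx w).trans_lt hc.2.1

theorem sub_splitWeight_le (hc : IsCritical w Cl x c) (hx : Binary x) :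
    Cl - splitWeight w c x ≤ w c := by
  have hinsert : univ.filter (fun i => i ≤ c ∧ x i = 0) = insert c (splitItems c x) := by
    grind [mem_splitItems, hc.1]
  rw [sub_le_iff_le_add, splitWeight_eq_sum_splitItems hx,
    ← sum_insert (by simp [mem_splitItems]), ← hinsert]
  exact hc.2.2

end IsCritical

theorem crit2_lower_bound_general {F z : ℤ} (hx : Binary x) (hfeas : ∑ i, v i * x i ≤ Cu)
    (hc : IsCritical w Cl x c) (hF : IsGreatest (followerValues p w Cl x) F)
    {T : Finset (Finset (Fin n))} (hz : IsLeast (crit2Values p w v Cu Cl c T) z) : z ≤ F := by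
  have hlt : splitWeight w c x < Cl := hc.splitWeight_lt hx
  have hresidual : 1 ≤ Cl - splitWeight w c x := Int.le_sub_left_of_add_le hlt
  calc
    z ≤ _ := hz.2 ⟨x, hx, hfeas, hc.1, hresidual, hc.sub_splitWeight_le hx, rfl⟩
    _ ≤ F := splitProfit_add_fold_max_pT_le hx hF.2 hlt.le T

end Follower

/-- **Proposition 2.** If the optimal leader strategy `xstar` (with optimal value
`z* = f xstar`) induces a critical item `c`, then for every finite family `T` of subsets
of the items, `z(CRIT₂(c, T)) ≤ z*`. -/
theorem crit2_lower_bound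
    (n : ℕ) (p w v : Fin n → ℤ) (Cu Cl : ℤ)
    (hp : ∀ i, 0 < p i) (hw : ∀ i, 0 < w i) (hv : ∀ i, 0 < v i)
    (hsort : ∀ i j : Fin n, i ≤ j → p j * w i ≤ p i * w j)
    (f : (Fin n → ℤ) → ℤ)
    (hf : ∀ x, Binary x → IsGreatest (followerValues p w Cl x) (f x))
    (xstar : Fin n → ℤ) (hxb : Binary xstar)
    (hxfeas : (∑ i, v i * xstar i) ≤ Cu)
    (hxopt : ∀ x, Binary x → (∑ i, v i * x i) ≤ Cu → f xstar ≤ f x)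
    (hcw : Cl < ∑ i ∈ univ.filter (fun i => xstar i = 0), w i)
    (c : Fin n) (hc : IsCritical w Cl xstar c) :
    ∀ (T : Finset (Finset (Fin n))) (z2 : ℤ),
      IsLeast (crit2Values p w v Cu Cl c T) z2 → z2 ≤ f xstar := by
  intro T z2 hz
  exact crit2_lower_bound_general hxb hxfeas hc (hf xstar hxb) hz
end

section
/- Feasibility of the optimal leader strategy for CRIT_1: Let x be a feasible leader strategy with ∑_{i : x_i = 0} w_i > C_l and critical item c. Then x satisfies all constraints of model CRIT_1(c) (namely ∑_i v_i x_i ≤ C_u, x_c = 0 and 1 ≤ C_l − ∑_{i < c} w_i (1 − x_i) ≤ w_c), and consequently z(CRIT_1(c)) ≤ ∑_{i < c} p_i (1 − x_i). -/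
open Finset

theorem sum_mul_one_sub_eq_sum_filter {ι R : Type*} [NonAssocRing R] [DecidableEq R]
    (s : Finset ι) (f : ι → R) {x : ι → R} (hx : ∀ i ∈ s, x i = 0 ∨ x i = 1) :
    ∑ i ∈ s, f i * (1 - x i) = ∑ i ∈ s with x i = 0, f i := by
  rw [sum_filter]
  refine sum_congr rfl fun i hi => ?_
  split_ifs with hxi
  · rw [hxi, sub_zero, mul_one]
  · rw [(hx i hi).resolve_left hxi, sub_self, mul_zero]

theorem filter_le_and_eq_insert {ι : Type*} [PartialOrder ι] [DecidableEq ι] [DecidableLE ι]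
    [DecidableLT ι] {s : Finset ι} {P : ι → Prop} [DecidablePred P] {c : ι} (hcs : c ∈ s)
    (hc : P c) : {i ∈ s | i ≤ c ∧ P i} = insert c {i ∈ s | i < c ∧ P i} := by
  ext i
  rcases eq_or_ne i c with rfl | hne
  · simp [hcs, hc]
  · simp [hne, hne.le_iff_lt]

section CriticalItem

variable {n : ℕ} {w x : Fin n → ℤ} {Cl : ℤ} {c : Fin n}

theorem Binary.splitWeight_eq_sum_filter (hx : Binary x) (w : Fin n → ℤ) (c : Fin n) :
    splitWeight w c x = ∑ i with i < c ∧ x i = 0, w i := by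
  rw [splitWeight, sum_mul_one_sub_eq_sum_filter _ _ fun i _ => hx i, filter_filter]

theorem IsCritical.splitWeight_lt_s17 (hc : IsCritical w Cl x c) (hx : Binary x) :
    splitWeight w c x < Cl :=
  (hx.splitWeight_eq_sum_filter w c).trans_lt hc.2.1

theorem IsCritical.le_add_splitWeight (hc : IsCritical w Cl x c) (hx : Binary x) :
    Cl ≤ w c + splitWeight w c x := by
  obtain ⟨hxc, -, hle⟩ := hc
  calc
    Cl ≤ ∑ i with i ≤ c ∧ x i = 0, w i := hle
    _ = w c + ∑ i with i < c ∧ x i = 0, w i := by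
      rw [filter_le_and_eq_insert (mem_univ c) hxc, sum_insert (by simp)]
    _ = w c + splitWeight w c x := by rw [hx.splitWeight_eq_sum_filter]

end CriticalItem

theorem leader_strategy_crit1_feasible_general
    {n : ℕ} (p : Fin n → ℤ) {w v : Fin n → ℤ} {Cu Cl : ℤ} {x : Fin n → ℤ} (hxb : Binary x)
    (hxfeas : (∑ i, v i * x i) ≤ Cu) {c : Fin n} (hc : IsCritical w Cl x c) :
    ((∑ i, v i * x i) ≤ Cu ∧ x c = 0 ∧
      1 ≤ Cl - splitWeight w c x ∧ Cl - splitWeight w c x ≤ w c) ∧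
    ∀ z1 : ℤ, IsLeast (crit1Values p w v Cu Cl c) z1 → z1 ≤ splitProfit p c x := by
  have one_le_residual : 1 ≤ Cl - splitWeight w c x :=
    Int.add_one_le_iff.mpr (sub_pos.mpr (hc.splitWeight_lt_s17 hxb))
  have residual_le : Cl - splitWeight w c x ≤ w c :=
    sub_le_iff_le_add.mpr (hc.le_add_splitWeight hxb)
  have profit_mem : splitProfit p c x ∈ crit1Values p w v Cu Cl c :=
    ⟨x, hxb, hxfeas, hc.1, one_le_residual, residual_le, rfl⟩
  exact ⟨⟨hxfeas, hc.1, one_le_residual, residual_le⟩, fun _ hz => hz.2 profit_mem⟩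

/-- **Feasibility of the leader strategy for CRIT₁.** A feasible leader strategy `x`
with critical item `c` satisfies all constraints of model `CRIT₁(c)`, hence
`z(CRIT₁(c)) ≤ ∑_{i<c} p i * (1 - x i)`. -/
theorem leader_strategy_crit1_feasible
    (n : ℕ) (p w v : Fin n → ℤ) (Cu Cl : ℤ)
    (hp : ∀ i, 0 < p i) (hw : ∀ i, 0 < w i) (hv : ∀ i, 0 < v i)
    (hsort : ∀ i j : Fin n, i ≤ j → p j * w i ≤ p i * w j)
    (x : Fin n → ℤ) (hxb : Binary x)
    (hxfeas : (∑ i, v i * x i) ≤ Cu)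
    (hcw : Cl < ∑ i ∈ univ.filter (fun i => x i = 0), w i)
    (c : Fin n) (hc : IsCritical w Cl x c) :
    ((∑ i, v i * x i) ≤ Cu ∧ x c = 0 ∧
      1 ≤ Cl - splitWeight w c x ∧ Cl - splitWeight w c x ≤ w c) ∧
    ∀ z1 : ℤ, IsLeast (crit1Values p w v Cu Cl c) z1 → z1 ≤ splitProfit p c x :=
  leader_strategy_crit1_feasible_general p hxb hxfeas hc
end
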